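/- arXiv:2102.00042 — 2 statements merged into one kernel-verified Lean document; each statement's English description precedes it below -/
import Mathlib

section
/- Under the same hypotheses as the preceding proposition (μ₀, μ₁ absolutely continuous probability measures on X, T_#μ₀ = μ₁, S = M∘(id,T), T and S injective outside μ₀-null sets and satisfying the Jacobi equations with Jacobians J_T, J_S, and log(m(S(z))·J_S(z)) ≥ (1/2)·log(m(T(z))·J_T(z)) + (1/2)·log(m(z)) for μ₀-a.e. z), for every bounded Borel function g : X → [0,∞) with ∫ g dμ₀ = 1 one has Ent( S_#(g·μ₀) ) ≤ (1/2)·Ent(g·μ₀) + (1/2)·Ent(T_#(g·μ₀)). -/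
open MeasureTheory

-- The relative entropy `Ent(μ) = ∫ ρ log ρ dm` if `μ = ρ·m ≪ m` (with value `+∞`
-- if the integral diverges or `μ` is not absolutely continuous w.r.t. `m`).
open Classical in
noncomputable def Ent {α : Type*} [MeasurableSpace α] (m μ : Measure α) : EReal :=
  if μ ≪ m ∧ Integrable (llr μ m) μ then ((∫ z, llr μ m z ∂μ : ℝ) : EReal) else ⊤

/-!
With respect to the reference measure, the image of `μ = ρ₀ · base` under a map `R` with Jacobian
`J` has at `R z` the log-density `log (ρ₀ z) - log (w (R z) * J z)`. The logarithmic inequality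
therefore says exactly that the log-density of the midpoint measure, read off along the
trajectories, is pointwise at most the average of the log-densities of the endpoints; integrating
gives convexity of the entropy. The integral on the left exists because a finite reference measure
`m` gives the integrable lower bound `llr η m ≥ -dm/dη`. The hypotheses survive reweighting by `g`:
since `R` is essentially injective, `g` is a function of `R z`, so both sides of the Jacobi equation
are multiplied by the same factor while `J` is unchanged.
-/

open Set
open scoped ENNReal

section Entropy

variable {Ω α : Type*} [MeasurableSpace Ω] [MeasurableSpace α] {m μ : Measure α}

theorem Ent_eq_integral (hμm : μ ≪ m) (hint : Integrable (llr μ m) μ) :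
    Ent m μ = ((∫ x, llr μ m x ∂μ : ℝ) : EReal) :=
  if_pos ⟨hμm, hint⟩

theorem Ent_eq_top_or_integrable_and_eq_integral (m μ : Measure α) :
    Ent m μ = ⊤ ∨ Integrable (llr μ m) μ ∧ Ent m μ = ((∫ x, llr μ m x ∂μ : ℝ) : EReal) := by
  by_cases h : μ ≪ m ∧ Integrable (llr μ m) μ
  · exact .inr ⟨h.2, Ent_eq_integral h.1 h.2⟩
  · exact .inl (if_neg h)

theorem coe_mul_Ent_ne_bot {a : ℝ} (ha : 0 < a) (m μ : Measure α) : (a : EReal) * Ent m μ ≠ ⊥ := by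
  rcases Ent_eq_top_or_integrable_and_eq_integral m μ with htop | ⟨-, hint⟩
  · simp [htop, EReal.coe_mul_top_of_pos ha]
  · rw [hint, ← EReal.coe_mul]
    exact EReal.coe_ne_bot _

theorem ae_neg_toReal_rnDeriv_le_llr [SigmaFinite μ] [SigmaFinite m] (hμm : μ ≪ m) :
    ∀ᵐ x ∂μ, -(m.rnDeriv μ x).toReal ≤ llr μ m x := by
  filter_upwards [neg_llr hμm] with x hx
  rw [neg_le, ← Pi.neg_apply, hx]
  exact Real.log_le_self ENNReal.toReal_nonneg

variable {ν : Measure Ω} [IsFiniteMeasure ν] [IsFiniteMeasure m] {P Q S : Ω → α} {a b : ℝ}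

theorem integrable_llr_map_of_le (hS : Measurable S) (hSm : ν.map S ≪ m) {u : Ω → ℝ}
    (hu : Integrable u ν) (hle : ∀ᵐ z ∂ν, llr (ν.map S) m (S z) ≤ u z) :
    Integrable (llr (ν.map S) m) (ν.map S) := by
  have hmeas : Measurable (llr (ν.map S) m) := measurable_llr _ _
  rw [integrable_map_measure hmeas.aestronglyMeasurable hS.aemeasurable]
  have hlower : Integrable (fun z ↦ -(m.rnDeriv (ν.map S) (S z)).toReal) ν :=
    Measure.integrable_toReal_rnDeriv.neg.comp_measurable hS
  exact integrable_of_le_of_le (hmeas.comp hS).aestronglyMeasurable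
    (ae_of_ae_map hS.aemeasurable (ae_neg_toReal_rnDeriv_le_llr hSm)) hle hlower hu

theorem Ent_map_le_of_ae_llr_le (ha : 0 < a) (hb : 0 < b)
    (hP : Measurable P) (hQ : Measurable Q) (hS : Measurable S) (hSm : ν.map S ≪ m)
    (hle : ∀ᵐ z ∂ν, llr (ν.map S) m (S z) ≤
      a * llr (ν.map P) m (P z) + b * llr (ν.map Q) m (Q z)) :
    Ent m (ν.map S) ≤ a * Ent m (ν.map P) + b * Ent m (ν.map Q) := by
  rcases Ent_eq_top_or_integrable_and_eq_integral m (ν.map P) with hPtop | ⟨hPint, hPeq⟩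
  · rw [hPtop, EReal.coe_mul_top_of_pos ha, EReal.top_add_of_ne_bot (coe_mul_Ent_ne_bot hb _ _)]
    exact le_top
  rcases Ent_eq_top_or_integrable_and_eq_integral m (ν.map Q) with hQtop | ⟨hQint, hQeq⟩
  · rw [hQtop, EReal.coe_mul_top_of_pos hb, EReal.add_top_of_ne_bot (coe_mul_Ent_ne_bot ha _ _)]
    exact le_top
  have hPint' : Integrable (fun z ↦ a * llr (ν.map P) m (P z)) ν :=
    (hPint.comp_measurable hP).const_mul a
  have hQint' : Integrable (fun z ↦ b * llr (ν.map Q) m (Q z)) ν :=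
    (hQint.comp_measurable hQ).const_mul b
  have hSint := integrable_llr_map_of_le hS hSm (hPint'.add hQint') hle
  rw [Ent_eq_integral hSm hSint, hPeq, hQeq, ← EReal.coe_mul, ← EReal.coe_mul, ← EReal.coe_add,
    EReal.coe_le_coe_iff, integral_map hS.aemeasurable (measurable_llr _ _).aestronglyMeasurable,
    integral_map hP.aemeasurable (measurable_llr _ _).aestronglyMeasurable,
    integral_map hQ.aemeasurable (measurable_llr _ _).aestronglyMeasurable,
    ← integral_const_mul, ← integral_const_mul, ← integral_add hPint' hQint']
  exact integral_mono_ae (hSint.comp_measurable hS) (hPint'.add hQint') hle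

end Entropy

section Density

variable {α β : Type*} [MeasurableSpace α] [MeasurableSpace β]

theorem ae_withDensity_ofReal_pos {μ : Measure α} {ρ : α → ℝ} (hρ : Measurable ρ) :
    ∀ᵐ x ∂μ.withDensity fun x ↦ ENNReal.ofReal (ρ x), 0 < ρ x := by
  rw [ae_withDensity_iff hρ.ennreal_ofReal]
  exact .of_forall fun x hx ↦ ENNReal.ofReal_pos.1 (pos_iff_ne_zero.2 hx)

theorem llr_withDensity_ofReal {base : Measure α} [SigmaFinite base] {ρ w : α → ℝ}
    (hρ : Measurable ρ) (hw : Measurable w)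
    (hac : base.withDensity (fun x ↦ ENNReal.ofReal (ρ x)) ≪
      base.withDensity fun x ↦ ENNReal.ofReal (w x)) :
    ∀ᵐ x ∂base.withDensity fun x ↦ ENNReal.ofReal (ρ x),
      llr (base.withDensity fun x ↦ ENNReal.ofReal (ρ x))
        (base.withDensity fun x ↦ ENNReal.ofReal (w x)) x = Real.log (ρ x) - Real.log (w x) := by
  have := SigmaFinite.withDensity_ofReal (μ := base) ρ
  have := SigmaFinite.withDensity_ofReal (μ := base) w
  have hbase := withDensity_absolutelyContinuous base fun x ↦ ENNReal.ofReal (ρ x)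
  filter_upwards [hbase (Measure.rnDeriv_mul_rnDeriv (κ := base) hac),
    hbase (Measure.rnDeriv_withDensity base hρ.ennreal_ofReal),
    hbase (Measure.rnDeriv_withDensity base hw.ennreal_ofReal),
    ae_withDensity_ofReal_pos hρ, hac (ae_withDensity_ofReal_pos hw)]
    with x hchain hρx hwx hρpos hwpos
  rw [Pi.mul_apply, hρx, hwx] at hchain
  have hprod := congrArg ENNReal.toReal hchain
  rw [ENNReal.toReal_mul, ENNReal.toReal_ofReal hρpos.le, ENNReal.toReal_ofReal hwpos.le] at hprod
  rw [llr, eq_div_of_mul_eq hwpos.ne' hprod, Real.log_div hρpos.ne' hwpos.ne']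

theorem map_withDensity_comp {μ : Measure α} {R : α → β} (hR : Measurable R) {h : β → ℝ≥0∞}
    (hh : Measurable h) : (μ.withDensity (h ∘ R)).map R = (μ.map R).withDensity h := by
  ext s hs
  rw [Measure.map_apply hR hs, withDensity_apply _ (hR hs), withDensity_apply _ hs,
    setLIntegral_map hs hh hR]
  rfl

theorem ae_mem_withDensity_indicator {base : Measure α} {X : Set α} (hX : MeasurableSet X)
    (w : α → ℝ≥0∞) : ∀ᵐ x ∂base.withDensity (X.indicator w), x ∈ X := by
  rw [withDensity_indicator hX]
  exact withDensity_absolutelyContinuous _ _ (ae_restrict_mem hX)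

theorem map_absolutelyContinuous_withDensity_indicator {base μ : Measure α} {X : Set α}
    {w : α → ℝ≥0∞} (hX : MeasurableSet X) (hw : Measurable w) (hwX : ∀ x ∈ X, w x ≠ 0)
    {R : α → α} (hR : Measurable R) (hRX : MapsTo R X X) (hmap : μ.map R ≪ base)
    (hμ : μ ≪ base.withDensity (X.indicator w)) : μ.map R ≪ base.withDensity (X.indicator w) := by
  have hμX : ∀ᵐ x ∂μ, x ∈ X := hμ (ae_mem_withDensity_indicator hX w)
  have hmapX : ∀ᵐ y ∂μ.map R, y ∈ X := (ae_map_iff hR.aemeasurable hX).2 (hμX.mono hRX)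
  rw [withDensity_indicator hX, ← Measure.restrict_eq_self_of_ae_mem hmapX]
  exact (hmap.restrict X).trans <| withDensity_absolutelyContinuous' hw.aemeasurable <|
    (ae_restrict_mem hX).mono hwX

variable [StandardBorelSpace α] [MeasurableSpace.CountablySeparated β]

theorem exists_measurable_comp_ae_eq_of_injOn {γ : Type*} [MeasurableSpace γ] [Nonempty γ]
    {μ : Measure α} {R : α → β} (hR : Measurable R) {N : Set α} (hN : μ N = 0) (hinj : InjOn R Nᶜ)
    {g : α → γ} (hg : Measurable g) : ∃ h : β → γ, Measurable h ∧ h ∘ R =ᵐ[μ] g := by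
  obtain ⟨N', hNN', hN'meas, hN'⟩ := exists_measurable_superset_of_null hN
  have : StandardBorelSpace ↑N'ᶜ := hN'meas.compl.standardBorel
  have hemb : MeasurableEmbedding (N'ᶜ.domRestrict R) :=
    (hR.comp measurable_subtype_coe).measurableEmbedding
      (hinj.mono (compl_subset_compl.2 hNN')).injective
  obtain ⟨h, hh, hcomp⟩ :=
    hemb.exists_measurable_extend (hg.comp measurable_subtype_coe) fun _ ↦ inferInstance
  refine ⟨h, hh, ?_⟩
  filter_upwards [measure_eq_zero_iff_ae_notMem.1 hN'] with z hz
  exact congrFun hcomp ⟨z, hz⟩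

end Density

section Jacobian

variable {α β : Type*} [MeasurableSpace α] [MeasurableSpace β]

/-- `J` is a Jacobian of `R` in the sense of the Jacobi (Monge–Ampère) equation: the image of `μ`
under `R` has a density `ρ` with respect to `base`, and `ρ (R z) * J z = ρ₀ z` for `μ`-almost every
`z`, where `ρ₀` stands for the density of `μ`. No differentiability of `R` is involved. -/
def HasJacobian (base : Measure β) (μ : Measure α) (R : α → β) (ρ₀ J : α → ℝ) : Prop :=
  ∃ ρ : β → ℝ, Measurable ρ ∧ μ.map R = base.withDensity (fun y ↦ ENNReal.ofReal (ρ y)) ∧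
    ∀ᵐ z ∂μ, ρ (R z) * J z = ρ₀ z

namespace HasJacobian

variable {base : Measure β} {μ : Measure α} {R : α → β} {ρ₀ J g : α → ℝ}

theorem id {base μ : Measure α} (hρ₀ : Measurable ρ₀)
    (hμ : μ = base.withDensity fun z ↦ ENNReal.ofReal (ρ₀ z)) : HasJacobian base μ id ρ₀ 1 :=
  ⟨ρ₀, hρ₀, by rw [Measure.map_id, hμ], .of_forall fun z ↦ mul_one (ρ₀ z)⟩

theorem map_absolutelyContinuous (hJ : HasJacobian base μ R ρ₀ J) : μ.map R ≪ base := by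
  obtain ⟨ρ, -, hmap, -⟩ := hJ
  exact hmap ▸ withDensity_absolutelyContinuous _ _

theorem withDensity [StandardBorelSpace α] [MeasurableSpace.CountablySeparated β]
    (hJ : HasJacobian base μ R ρ₀ J) (hR : Measurable R)
    (hinj : ∃ N : Set α, μ N = 0 ∧ InjOn R Nᶜ) (hg : Measurable g) :
    HasJacobian base (μ.withDensity fun z ↦ ENNReal.ofReal (g z)) R (g * ρ₀) J := by
  obtain ⟨ρ, hρ, hmap, hjac⟩ := hJ
  obtain ⟨N, hN, hinjN⟩ := hinj
  obtain ⟨h, hh, hcomp⟩ := exists_measurable_comp_ae_eq_of_injOn hR hN hinjN hg.real_toNNReal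
  refine ⟨fun y ↦ h y * ρ y, by fun_prop, ?_, ?_⟩
  · have hgh : (fun z ↦ ENNReal.ofReal (g z)) =ᵐ[μ] (fun y ↦ (h y : ℝ≥0∞)) ∘ R := by
      filter_upwards [hcomp] with z hz
      exact congrArg _ hz.symm
    simp_rw [ENNReal.ofReal_mul (h _).coe_nonneg, ENNReal.ofReal_coe_nnreal]
    rw [withDensity_congr_ae hgh, map_withDensity_comp hR hh.coe_nnreal_ennreal, hmap,
      ← withDensity_mul _ hρ.ennreal_ofReal hh.coe_nnreal_ennreal, mul_comm]
    rfl
  · have hνμ := withDensity_absolutelyContinuous μ fun z ↦ ENNReal.ofReal (g z)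
    filter_upwards [hνμ hcomp, hνμ hjac, ae_withDensity_ofReal_pos hg] with z hhz hjacz hgz
    rw [Function.comp_apply] at hhz
    rw [hhz, Real.coe_toNNReal _ hgz.le, mul_assoc, hjacz, Pi.mul_apply]

theorem llr_map_ae_eq [SigmaFinite base] (hJ : HasJacobian base μ R ρ₀ J) (hR : Measurable R)
    {w : β → ℝ} (hw : Measurable w)
    (hac : μ.map R ≪ base.withDensity fun y ↦ ENNReal.ofReal (w y))
    (hρ₀ : ∀ᵐ z ∂μ, ρ₀ z ≠ 0) :
    ∀ᵐ z ∂μ, llr (μ.map R) (base.withDensity fun y ↦ ENNReal.ofReal (w y)) (R z) =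
      Real.log (ρ₀ z) - Real.log (w (R z) * J z) := by
  obtain ⟨ρ, hρ, hmap, hjac⟩ := hJ
  have hllr := llr_withDensity_ofReal hρ hw (hmap ▸ hac)
  rw [← hmap] at hllr
  have hwpos := hac (ae_withDensity_ofReal_pos hw)
  filter_upwards [ae_of_ae_map hR.aemeasurable hllr, ae_of_ae_map hR.aemeasurable hwpos, hjac, hρ₀]
    with z hllrz hwz hjacz hρ₀z
  rw [← hjacz] at hρ₀z
  rw [hllrz, ← hjacz, Real.log_mul (left_ne_zero_of_mul hρ₀z) (right_ne_zero_of_mul hρ₀z),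
    Real.log_mul hwz.ne' (right_ne_zero_of_mul hρ₀z)]
  ring

end HasJacobian

end Jacobian

theorem Ent_map_le_of_hasJacobian {Ω α : Type*} [MeasurableSpace Ω] [MeasurableSpace α]
    {base : Measure α} [SigmaFinite base] {w : α → ℝ} (hw : Measurable w)
    [IsFiniteMeasure (base.withDensity fun x ↦ ENNReal.ofReal (w x))]
    {ν : Measure Ω} [IsFiniteMeasure ν] {ρ₀ JP JQ JS : Ω → ℝ} (hρ₀ : ∀ᵐ z ∂ν, ρ₀ z ≠ 0)
    {P Q S : Ω → α} (hP : Measurable P) (hQ : Measurable Q) (hS : Measurable S)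
    (hJP : HasJacobian base ν P ρ₀ JP) (hJQ : HasJacobian base ν Q ρ₀ JQ)
    (hJS : HasJacobian base ν S ρ₀ JS)
    (hPw : ν.map P ≪ base.withDensity fun x ↦ ENNReal.ofReal (w x))
    (hQw : ν.map Q ≪ base.withDensity fun x ↦ ENNReal.ofReal (w x))
    (hSw : ν.map S ≪ base.withDensity fun x ↦ ENNReal.ofReal (w x))
    {a b : ℝ} (ha : 0 < a) (hb : 0 < b) (hab : a + b = 1)
    (hlog : ∀ᵐ z ∂ν, a * Real.log (w (P z) * JP z) + b * Real.log (w (Q z) * JQ z) ≤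
      Real.log (w (S z) * JS z)) :
    Ent (base.withDensity fun x ↦ ENNReal.ofReal (w x)) (ν.map S) ≤
      a * Ent (base.withDensity fun x ↦ ENNReal.ofReal (w x)) (ν.map P) +
      b * Ent (base.withDensity fun x ↦ ENNReal.ofReal (w x)) (ν.map Q) := by
  refine Ent_map_le_of_ae_llr_le ha hb hP hQ hS hSw ?_
  filter_upwards [hJP.llr_map_ae_eq hP hw hPw hρ₀, hJQ.llr_map_ae_eq hQ hw hQw hρ₀,
    hJS.llr_map_ae_eq hS hw hSw hρ₀, hlog] with z hllrP hllrQ hllrS hlogz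
  rw [hllrP, hllrQ, hllrS]
  linear_combination hlogz - Real.log (ρ₀ z) * hab

theorem Ent_map_withDensity_le_of_hasJacobian {α : Type*} [MeasurableSpace α]
    [StandardBorelSpace α] {base m μ : Measure α} [SigmaFinite base] [IsFiniteMeasure m]
    {w : α → ℝ} (hw : Measurable w) (hm : m = base.withDensity fun z ↦ ENNReal.ofReal (w z))
    {ρ₀ : α → ℝ} (hρ₀ : Measurable ρ₀) (hμ : μ = base.withDensity fun z ↦ ENNReal.ofReal (ρ₀ z))
    {T S : α → α} (hT : Measurable T) (hS : Measurable S)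
    (hμm : μ ≪ m) (hTm : μ.map T ≪ m) (hSm : μ.map S ≪ m)
    (hinjT : ∃ N : Set α, μ N = 0 ∧ InjOn T Nᶜ) (hinjS : ∃ N : Set α, μ N = 0 ∧ InjOn S Nᶜ)
    {JT JS : α → ℝ} (hJT : HasJacobian base μ T ρ₀ JT) (hJS : HasJacobian base μ S ρ₀ JS)
    {a b : ℝ} (ha : 0 < a) (hb : 0 < b) (hab : a + b = 1)
    (hlog : ∀ᵐ z ∂μ, a * Real.log (w z) + b * Real.log (w (T z) * JT z) ≤
      Real.log (w (S z) * JS z))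
    {g : α → ℝ} (hg : Measurable g) (hgint : Integrable g μ) :
    Ent m ((μ.withDensity fun z ↦ ENNReal.ofReal (g z)).map S) ≤
      a * Ent m (μ.withDensity fun z ↦ ENNReal.ofReal (g z)) +
      b * Ent m ((μ.withDensity fun z ↦ ENNReal.ofReal (g z)).map T) := by
  subst hm
  set ν := μ.withDensity fun z ↦ ENNReal.ofReal (g z)
  have hνμ : ν ≪ μ := withDensity_absolutelyContinuous _ _
  have : IsFiniteMeasure ν := isFiniteMeasure_withDensity_ofReal hgint.2
  have hdens_ne : ∀ᵐ z ∂ν, (g * ρ₀) z ≠ 0 := by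
    have hρ₀pos : ∀ᵐ z ∂μ, 0 < ρ₀ z := hμ ▸ ae_withDensity_ofReal_pos hρ₀
    filter_upwards [hνμ hρ₀pos, ae_withDensity_ofReal_pos hg] with z hρ₀z hgz
    exact (mul_pos hgz hρ₀z).ne'
  have hJid : HasJacobian base ν id (g * ρ₀) 1 :=
    (HasJacobian.id hρ₀ hμ).withDensity measurable_id ⟨∅, measure_empty, injOn_id _⟩ hg
  have hidm : ν.map id ≪ base.withDensity fun z ↦ ENNReal.ofReal (w z) := by
    rw [Measure.map_id]
    exact hνμ.trans hμm
  have hlogν : ∀ᵐ z ∂ν, a * Real.log (w (id z) * (1 : α → ℝ) z) +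
      b * Real.log (w (T z) * JT z) ≤ Real.log (w (S z) * JS z) := by
    filter_upwards [hνμ hlog] with z hlogz
    rwa [Pi.one_apply, mul_one]
  have hmain := Ent_map_le_of_hasJacobian hw hdens_ne measurable_id hT hS hJid
    (hJT.withDensity hT hinjT hg) (hJS.withDensity hS hinjS hg) hidm
    ((hνμ.map hT).trans hTm) ((hνμ.map hS).trans hSm) ha hb hab hlogν
  rwa [Measure.map_id] at hmain

theorem stmt_8_general {α : Type*} [MeasurableSpace α] [StandardBorelSpace α]
    {base m μ₀ : Measure α} [SigmaFinite base] [IsFiniteMeasure m]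
    {X : Set α} (hX : MeasurableSet X) {w : α → ℝ} (hw : Measurable w)
    (hm : m = base.withDensity (X.indicator fun z ↦ ENNReal.ofReal (w z)))
    {ρ₀ : α → ℝ} (hρ₀ : Measurable ρ₀)
    (hμ₀ : μ₀ = base.withDensity fun z ↦ ENNReal.ofReal (ρ₀ z))
    {T S : α → α} (hT : Measurable T) (hS : Measurable S)
    (hμ₀m : μ₀ ≪ m) (hTm : μ₀.map T ≪ m) (hSm : μ₀.map S ≪ m)
    (hinjT : ∃ N : Set α, μ₀ N = 0 ∧ InjOn T Nᶜ) (hinjS : ∃ N : Set α, μ₀ N = 0 ∧ InjOn S Nᶜ)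
    {JT JS : α → ℝ} (hJT : HasJacobian base μ₀ T ρ₀ JT) (hJS : HasJacobian base μ₀ S ρ₀ JS)
    {a b : ℝ} (ha : 0 < a) (hb : 0 < b) (hab : a + b = 1)
    (hlog : ∀ᵐ z ∂μ₀, Real.log (w (S z) * JS z) ≥
      b * Real.log (w (T z) * JT z) + a * Real.log (w z))
    {g : α → ℝ} (hg : Measurable g) (hgint : Integrable g μ₀) :
    Ent m ((μ₀.withDensity fun z ↦ ENNReal.ofReal (g z)).map S) ≤
      a * Ent m (μ₀.withDensity fun z ↦ ENNReal.ofReal (g z)) +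
      b * Ent m ((μ₀.withDensity fun z ↦ ENNReal.ofReal (g z)).map T) := by
  have hmX : ∀ᵐ z ∂m, z ∈ X := hm ▸ ae_mem_withDensity_indicator hX _
  have hm_ofReal : m = base.withDensity fun z ↦ ENNReal.ofReal (X.indicator w z) := by
    rw [hm]
    exact congrArg _ (indicator_comp_of_zero ENNReal.ofReal_zero)
  refine Ent_map_withDensity_le_of_hasJacobian (hw.indicator hX) hm_ofReal hρ₀ hμ₀ hT hS hμ₀m hTm
    hSm hinjT hinjS hJT hJS ha hb hab ?_ hg hgint
  filter_upwards [hlog, hμ₀m hmX, ae_of_ae_map hT.aemeasurable (hTm hmX),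
    ae_of_ae_map hS.aemeasurable (hSm hmX)] with z hlogz hzX hTzX hSzX
  rw [indicator_of_mem hzX, indicator_of_mem hTzX, indicator_of_mem hSzX, add_comm]
  exact hlogz

section Subgraph

theorem monotoneOn_Ici_of_hasDerivAt_of_hasDerivAt_nonneg {f f' f'' : ℝ → ℝ} {x₀ : ℝ}
    (hf : ∀ x, HasDerivAt f (f' x) x) (hf' : ∀ x, HasDerivAt f' (f'' x) x) (hf'' : ∀ x, 0 ≤ f'' x)
    (hx₀ : f' x₀ = 0) : MonotoneOn f (Ici x₀) := by
  have hf'mono : Monotone f' := monotone_of_hasDerivAt_nonneg hf' hf''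
  refine monotoneOn_of_hasDerivWithinAt_nonneg (convex_Ici x₀)
    (fun x _ ↦ (hf x).continuousAt.continuousWithinAt) (fun x _ ↦ (hf x).hasDerivWithinAt) ?_
  intro x hx
  exact hx₀ ▸ hf'mono (interior_subset hx)

theorem isCompact_setOf_mem_and_nonneg_and_le {α : Type*} [TopologicalSpace α] [T2Space α]
    {s : Set α} (hs : IsCompact s) {f : α → ℝ} (hf : Continuous f) :
    IsCompact {p : α × ℝ | p.1 ∈ s ∧ 0 ≤ p.2 ∧ p.2 ≤ f p.1} := by
  obtain ⟨C, hC⟩ := hs.bddAbove_image hf.continuousOn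
  refine (hs.prod (isCompact_Icc (a := 0) (b := C))).of_isClosed_subset ?_ ?_
  · exact (hs.isClosed.preimage continuous_fst).inter <|
      (isClosed_le continuous_const continuous_snd).inter
        (isClosed_le continuous_snd (hf.comp continuous_fst))
  · rintro p ⟨hp₁, hp₀, hpf⟩
    exact ⟨hp₁, hp₀, hpf.trans (hC (mem_image_of_mem f hp₁))⟩

theorem isFiniteMeasure_withDensity_indicator_of_isCompact {α : Type*} [TopologicalSpace α]
    [MeasurableSpace α] [OpensMeasurableSpace α] {base : Measure α}
    [IsFiniteMeasureOnCompacts base] {X : Set α} (hX : IsCompact X) (hXm : MeasurableSet X)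
    {w : α → ℝ} (hw : ContinuousOn w X) :
    IsFiniteMeasure (base.withDensity (X.indicator fun z ↦ ENNReal.ofReal (w z))) := by
  rw [withDensity_indicator hXm]
  exact isFiniteMeasure_withDensity_ofReal (hw.integrableOn_compact' hX hXm).2

/-- The density `m(x, y)` of the reference measure with respect to Lebesgue measure: on the fibre
`{x} × [0, f x]` it is a Gaussian rescaled to the height `f x`. It is meaningful where `f x ≠ 0`. -/
noncomputable def fiberGaussian (f : ℝ → ℝ) (K : ℝ) (z : ℝ × ℝ) : ℝ :=
  1 / f z.1 * Real.exp (-K * (z.2 / f z.1) ^ 2)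

variable {f : ℝ → ℝ} (K : ℝ)

theorem measurable_fiberGaussian (hf : Measurable f) : Measurable (fiberGaussian f K) := by
  unfold fiberGaussian
  fun_prop

theorem fiberGaussian_pos {z : ℝ × ℝ} (hz : 0 < f z.1) : 0 < fiberGaussian f K z := by
  unfold fiberGaussian
  positivity

theorem continuousOn_fiberGaussian (hf : Continuous f) {s : Set (ℝ × ℝ)}
    (hs : ∀ z ∈ s, f z.1 ≠ 0) : ContinuousOn (fiberGaussian f K) s := by
  unfold fiberGaussian
  fun_prop (disch := assumption)

end Subgraph

theorem stmt_8 (ε k K : ℝ) (hε : 0 < ε) (hεk : ε < k) (hk : k < 1 / 2) (hK : 1 ≤ K)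
    (φ : ℝ → ℝ) (hφc : Continuous φ) (hφ0 : ∀ x, 0 ≤ φ x) (hφ1 : ∀ x, φ x ≤ 1)
    (hφsupp : ∀ x, x ∉ Set.Icc (-k) k → φ x = 0)
    (hφint : (∫ x, φ x) = k)
    (f f' : ℝ → ℝ)
    (hfd : ∀ x, HasDerivAt f (f' x) x)
    (hfd2 : ∀ x, HasDerivAt f' (φ x) x)
    (hf'm1 : f' (-1) = 0) (hfm1 : f (-1) = ε)
    (X : Set (ℝ × ℝ))
    (hX : X = {p : ℝ × ℝ | p.1 ∈ Set.Icc (-1 : ℝ) 1 ∧ 0 ≤ p.2 ∧ p.2 ≤ f p.1})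
    -- the density of the reference measure m and the measure m itself
    (mdens : ℝ × ℝ → ℝ)
    (hmdens : mdens = fun z => (1 / f z.1) * Real.exp (-K * (z.2 / f z.1) ^ 2))
    (m : Measure (ℝ × ℝ))
    (hm : m = volume.withDensity (X.indicator fun z => ENNReal.ofReal (mdens z)))
    -- the marginals, absolutely continuous w.r.t. m, with Lebesgue densities
    (μ₀ μ₁ : Measure (ℝ × ℝ))
    (hp₀ : IsProbabilityMeasure μ₀) (hp₁ : IsProbabilityMeasure μ₁)
    (hac₀ : μ₀ ≪ m) (hac₁ : μ₁ ≪ m)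
    (ρ₀ ρ₁ : ℝ × ℝ → ℝ) (hρ₀m : Measurable ρ₀) (hρ₁m : Measurable ρ₁)
    (hρ₀0 : ∀ z, 0 ≤ ρ₀ z) (hρ₁0 : ∀ z, 0 ≤ ρ₁ z)
    (hμ₀ : μ₀ = volume.withDensity fun z => ENNReal.ofReal (ρ₀ z))
    (hμ₁ : μ₁ = volume.withDensity fun z => ENNReal.ofReal (ρ₁ z))
    -- the transport map T and the midpoint selection M
    (T : ℝ × ℝ → ℝ × ℝ) (hTm : Measurable T) (hTX : ∀ z ∈ X, T z ∈ X)
    (M : (ℝ × ℝ) × (ℝ × ℝ) → ℝ × ℝ) (hMm : Measurable M)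
    (hMX : ∀ p ∈ X, ∀ q ∈ X, M (p, q) ∈ X)
    (S : ℝ × ℝ → ℝ × ℝ) (hS : S = fun z => M (z, T z))
    (hpushT : Measure.map T μ₀ = μ₁)
    -- the midpoint measure, absolutely continuous with Lebesgue density
    (μhalf : Measure (ℝ × ℝ)) (hμhalf : μhalf = Measure.map S μ₀)
    (ρhalf : ℝ × ℝ → ℝ) (hρhm : Measurable ρhalf) (hρh0 : ∀ z, 0 ≤ ρhalf z)
    (hμhd : μhalf = volume.withDensity fun z => ENNReal.ofReal (ρhalf z))
    -- injectivity outside a null set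
    (hinjT : ∃ N : Set (ℝ × ℝ), μ₀ N = 0 ∧ Set.InjOn T Nᶜ)
    (hinjS : ∃ N : Set (ℝ × ℝ), μ₀ N = 0 ∧ Set.InjOn S Nᶜ)
    -- the Jacobi equations
    (JT JS : ℝ × ℝ → ℝ) (hJTm : Measurable JT) (hJSm : Measurable JS)
    (hJT0 : ∀ z, 0 ≤ JT z) (hJS0 : ∀ z, 0 ≤ JS z)
    (hJacT : ∀ᵐ z ∂μ₀, ρ₁ (T z) * JT z = ρ₀ z)
    (hJacS : ∀ᵐ z ∂μ₀, ρhalf (S z) * JS z = ρ₀ z)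
    -- the pointwise logarithmic inequality
    (hlog : ∀ᵐ z ∂μ₀,
      Real.log (mdens (S z) * JS z) ≥
        (1 / 2) * Real.log (mdens (T z) * JT z) + (1 / 2) * Real.log (mdens z))
    -- the weight function g
    (g : ℝ × ℝ → ℝ) (hgm : Measurable g) (hg0 : ∀ z, 0 ≤ g z)
    (hgbd : ∃ C : ℝ, ∀ z, g z ≤ C)
    (hgint : (∫ z, g z ∂μ₀) = 1) :
    Ent m (Measure.map S (μ₀.withDensity fun z => ENNReal.ofReal (g z))) ≤
      ((1 / 2 : ℝ) : EReal) * Ent m (μ₀.withDensity fun z => ENNReal.ofReal (g z)) +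
      ((1 / 2 : ℝ) : EReal) *
        Ent m (Measure.map T (μ₀.withDensity fun z => ENNReal.ofReal (g z))) := by
  obtain rfl : mdens = fiberGaussian f K := hmdens
  have hf : Continuous f := continuous_iff_continuousAt.2 fun x ↦ (hfd x).continuousAt
  have hf_pos : ∀ z ∈ X, 0 < f z.1 := by
    intro z hz
    have hz₁ : -1 ≤ z.1 := (hX ▸ hz).1.1
    have hmono := monotoneOn_Ici_of_hasDerivAt_of_hasDerivAt_nonneg hfd hfd2 hφ0 hf'm1
    exact hε.trans_le (hfm1 ▸ hmono self_mem_Ici hz₁ hz₁)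
  have hXc : IsCompact X := hX ▸ isCompact_setOf_mem_and_nonneg_and_le isCompact_Icc hf
  have hw : Measurable (fiberGaussian f K) := measurable_fiberGaussian K hf.measurable
  have hm_fin : IsFiniteMeasure m := hm ▸ isFiniteMeasure_withDensity_indicator_of_isCompact hXc
    hXc.measurableSet (continuousOn_fiberGaussian K hf fun z hz ↦ (hf_pos z hz).ne')
  have hSmeas : Measurable S := hS ▸ hMm.comp (measurable_id.prodMk hTm)
  have hSX : MapsTo S X X := fun z hz ↦ hS ▸ hMX z hz (T z) (hTX z hz)
  have hJT : HasJacobian volume μ₀ T ρ₀ JT := ⟨ρ₁, hρ₁m, hpushT.trans hμ₁, hJacT⟩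
  have hJS : HasJacobian volume μ₀ S ρ₀ JS := ⟨ρhalf, hρhm, hμhalf.symm.trans hμhd, hJacS⟩
  have hSm : μ₀.map S ≪ m := hm ▸ map_absolutelyContinuous_withDensity_indicator hXc.measurableSet
    hw.ennreal_ofReal (fun z hz ↦ (ENNReal.ofReal_pos.2 (fiberGaussian_pos K (hf_pos z hz))).ne')
    hSmeas hSX hJS.map_absolutelyContinuous (hm ▸ hac₀)
  exact stmt_8_general hXc.measurableSet hw hm hρ₀m hμ₀ hTm hSmeas hac₀ (hpushT ▸ hac₁) hSm
    hinjT hinjS hJT hJS one_half_pos one_half_pos (add_halves 1) hlog hgm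
    (.of_integral_ne_zero (hgint ▸ one_ne_zero))
end

section
/- There exists k₀ > 0 such that for all ε, k with 0 < ε < k < k₀ the following holds. Let (x₀,y₀),(x₁,y₁) ∈ X with x₀ ≠ x₁ and |y₁−y₀| ≤ (1/2)·|x₁−x₀|. Then the point p = ( (x₀+x₁)/2 , (1/2)·(y₀/f(x₀) + y₁/f(x₁))·f((x₀+x₁)/2) ) belongs to X and is a d_∞-midpoint of (x₀,y₀) and (x₁,y₁): d_∞(p,(x₀,y₀)) = d_∞(p,(x₁,y₁)) = (1/2)·d_∞((x₀,y₀),(x₁,y₁)) = (1/2)·|x₁−x₀|. -/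
/-!
The fibrewise midpoint `p` of `p₀ = (x₀, y₀)` and `p₁ = (x₁, y₁)` averages the relative heights
`tᵢ = yᵢ / f xᵢ ∈ [0, 1]`. With `m` the midpoint of `x₀` and `x₁`, its height differs from
`(y₀ + y₁) / 2` by `(t₀ (f m - f x₀) + t₁ (f m - f x₁)) / 2`, hence by at most
`K |x₁ - x₀| / 2` when `f` is `K`-Lipschitz. If the slope between `p₀` and `p₁` is at most `C` and
`C + K ≤ 1`, the vertical distances from `p` to `p₀` and `p₁` are therefore at most
`|x₁ - x₀| / 2`, so the sup-distance is the horizontal one throughout. Here `C = 1 / 2`,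
and `0 ≤ f' ≤ ∫ φ = k` on `[-1, ∞)`, so `k₀ = 1 / 2` works.
-/

open MeasureTheory Set
open scoped NNReal

section NonnegSecondDerivative

theorem sub_le_integral_of_hasDerivAt_nonneg {g φ : ℝ → ℝ} (hg : ∀ x, HasDerivAt g (φ x) x)
    (hφ : Integrable φ) (hφ₀ : 0 ≤ φ) {a b : ℝ} (hab : a ≤ b) : g b - g a ≤ ∫ x, φ x :=
  calc g b - g a = ∫ x in a..b, φ x :=
        (intervalIntegral.integral_eq_sub_of_hasDerivAt (fun x _ ↦ hg x)
          hφ.intervalIntegrable).symm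
    _ = ∫ x in Ioc a b, φ x := intervalIntegral.integral_of_le hab
    _ ≤ ∫ x, φ x := setIntegral_le_integral hφ (.of_forall hφ₀)

variable {f f' φ : ℝ → ℝ} {a : ℝ}

theorem monotoneOn_Ici_of_second_hasDerivAt_nonneg (hf : ∀ x, HasDerivAt f (f' x) x)
    (hf' : ∀ x, HasDerivAt f' (φ x) x) (hφ₀ : 0 ≤ φ) (ha : f' a = 0) :
    MonotoneOn f (Ici a) := by
  have hf'_mono : Monotone f' := monotone_of_hasDerivAt_nonneg hf' hφ₀
  refine monotoneOn_of_hasDerivWithinAt_nonneg (convex_Ici a)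
    (fun x _ ↦ (hf x).continuousAt.continuousWithinAt) (fun x _ ↦ (hf x).hasDerivWithinAt) ?_
  intro x hx
  exact ha ▸ hf'_mono (interior_subset hx)

theorem lipschitzOnWith_Ici_of_second_hasDerivAt_nonneg (hf : ∀ x, HasDerivAt f (f' x) x)
    (hf' : ∀ x, HasDerivAt f' (φ x) x) (hφ : Integrable φ) (hφ₀ : 0 ≤ φ) (ha : f' a = 0) :
    LipschitzOnWith (∫ x, φ x).toNNReal f (Ici a) := by
  refine (convex_Ici a).lipschitzOnWith_of_nnnorm_hasDerivWithin_le
    (fun x _ ↦ (hf x).hasDerivWithinAt) fun x hx ↦ ?_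
  have hlower : 0 ≤ f' x := ha ▸ monotone_of_hasDerivAt_nonneg hf' hφ₀ hx
  have hupper : f' x ≤ ∫ x, φ x := by
    simpa only [ha, sub_zero] using sub_le_integral_of_hasDerivAt_nonneg hf' hφ hφ₀ hx
  rw [← Real.toNNReal_eq_nnnorm_of_nonneg hlower]
  exact Real.toNNReal_le_toNNReal hupper

end NonnegSecondDerivative

section FiberMidpoint

/-- The part of the subgraph of `f` lying over `s` and above height `0`, with both boundary graphs
included (unlike Mathlib's `regionBetween`). -/
def closedSubgraph {E : Type*} (f : E → ℝ) (s : Set E) : Set (E × ℝ) :=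
  {p | p.1 ∈ s ∧ 0 ≤ p.2 ∧ p.2 ≤ f p.1}

/-- The height of `p` as a fraction of the length `f p.1` of the fibre of the subgraph through `p`;
it takes the junk value `0` when `f p.1 = 0`. -/
noncomputable def relativeHeight {E : Type*} (f : E → ℝ) (p : E × ℝ) : ℝ :=
  p.2 / f p.1

theorem relativeHeight_mem_Icc {E : Type*} {f : E → ℝ} {s : Set E} {p : E × ℝ}
    (hp : p ∈ closedSubgraph f s) : relativeHeight f p ∈ Icc 0 1 :=
  have hf : 0 ≤ f p.1 := hp.2.1.trans hp.2.2
  ⟨div_nonneg hp.2.1 hf, div_le_one_of_le₀ hp.2.2 hf⟩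

variable {E : Type*} [SeminormedAddCommGroup E] [NormedSpace ℝ E]
  {f : E → ℝ} {s : Set E} {p q : E × ℝ} {K : ℝ≥0} {C : ℝ}

/-- The point over the midpoint of the base points of `p` and `q` whose relative height is the
average of their relative heights. -/
noncomputable def fiberMidpoint (f : E → ℝ) (p q : E × ℝ) : E × ℝ :=
  (midpoint ℝ p.1 q.1,
    (1 / 2) * (relativeHeight f p + relativeHeight f q) * f (midpoint ℝ p.1 q.1))

theorem fiberMidpoint_comm (f : E → ℝ) (p q : E × ℝ) :
    fiberMidpoint f p q = fiberMidpoint f q p := by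
  rw [fiberMidpoint, fiberMidpoint, midpoint_comm, add_comm (relativeHeight f p)]

theorem fiberMidpoint_mem_closedSubgraph (hs : Convex ℝ s) (hf : ∀ x ∈ s, 0 ≤ f x)
    (hp : p ∈ closedSubgraph f s) (hq : q ∈ closedSubgraph f s) :
    fiberMidpoint f p q ∈ closedSubgraph f s := by
  have hm : midpoint ℝ p.1 q.1 ∈ s := hs.midpoint_mem hp.1 hq.1
  obtain ⟨hp₀, hp₁⟩ := relativeHeight_mem_Icc hp
  obtain ⟨hq₀, hq₁⟩ := relativeHeight_mem_Icc hq
  exact ⟨hm, mul_nonneg (by linarith) (hf _ hm), mul_le_of_le_one_left (hf _ hm) (by linarith)⟩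

theorem midpoint_eq_add_div_two {𝕜 : Type*} [Field 𝕜] [Invertible (2 : 𝕜)] (x y : 𝕜) :
    midpoint 𝕜 x y = (x + y) / 2 := by
  rw [midpoint_eq_smul_add, smul_eq_mul, invOf_eq_inv, div_eq_inv_mul]

theorem fiberMidpoint_snd_sub_midpoint (hp : f p.1 ≠ 0) (hq : f q.1 ≠ 0) :
    (fiberMidpoint f p q).2 - midpoint ℝ p.2 q.2 =
      (relativeHeight f p * (f (midpoint ℝ p.1 q.1) - f p.1) +
        relativeHeight f q * (f (midpoint ℝ p.1 q.1) - f q.1)) / 2 := by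
  have hp' : relativeHeight f p * f p.1 = p.2 := div_mul_cancel₀ _ hp
  have hq' : relativeHeight f q * f q.1 = q.2 := div_mul_cancel₀ _ hq
  rw [midpoint_eq_add_div_two p.2, ← hp', ← hq', fiberMidpoint]
  ring

theorem dist_fiberMidpoint_snd_midpoint_le (hs : Convex ℝ s) (hf : ∀ x ∈ s, 0 < f x)
    (hfK : LipschitzOnWith K f s) (hp : p ∈ closedSubgraph f s) (hq : q ∈ closedSubgraph f s) :
    dist (fiberMidpoint f p q).2 (midpoint ℝ p.2 q.2) ≤ K / 2 * dist p.1 q.1 := by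
  set m := midpoint ℝ p.1 q.1 with hm_def
  have hm : m ∈ s := hs.midpoint_mem hp.1 hq.1
  have weighted_le {r : E × ℝ} (hr : r ∈ closedSubgraph f s) :
      |relativeHeight f r * (f m - f r.1)| ≤ K * dist m r.1 := by
    obtain ⟨h₀, h₁⟩ := relativeHeight_mem_Icc hr
    rw [abs_mul, abs_of_nonneg h₀]
    exact (mul_le_of_le_one_left (abs_nonneg _) h₁).trans (hfK.dist_le_mul m hm r.1 hr.1)
  have hmp : dist m p.1 = dist p.1 q.1 / 2 := by
    rw [hm_def, dist_midpoint_left, Real.norm_two, div_eq_inv_mul]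
  have hmq : dist m q.1 = dist p.1 q.1 / 2 := by
    rw [hm_def, dist_midpoint_right, Real.norm_two, div_eq_inv_mul]
  rw [Real.dist_eq, fiberMidpoint_snd_sub_midpoint (hf _ hp.1).ne' (hf _ hq.1).ne', abs_div,
    abs_two]
  calc |relativeHeight f p * (f m - f p.1) + relativeHeight f q * (f m - f q.1)| / 2
      ≤ (K * dist m p.1 + K * dist m q.1) / 2 := by
        gcongr
        exact (abs_add_le _ _).trans (add_le_add (weighted_le hp) (weighted_le hq))
    _ = K / 2 * dist p.1 q.1 := by rw [hmp, hmq]; ring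

theorem dist_fiberMidpoint_snd_left_le (hs : Convex ℝ s) (hf : ∀ x ∈ s, 0 < f x)
    (hfK : LipschitzOnWith K f s) (hp : p ∈ closedSubgraph f s) (hq : q ∈ closedSubgraph f s)
    (hpq : dist p.2 q.2 ≤ C * dist p.1 q.1) :
    dist (fiberMidpoint f p q).2 p.2 ≤ (C + K) / 2 * dist p.1 q.1 :=
  calc dist (fiberMidpoint f p q).2 p.2
      ≤ dist (fiberMidpoint f p q).2 (midpoint ℝ p.2 q.2) + dist (midpoint ℝ p.2 q.2) p.2 :=
        dist_triangle _ _ _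
    _ ≤ K / 2 * dist p.1 q.1 + 2⁻¹ * (C * dist p.1 q.1) := by
        rw [dist_midpoint_left, Real.norm_two]
        gcongr
        exact dist_fiberMidpoint_snd_midpoint_le hs hf hfK hp hq
    _ = (C + K) / 2 * dist p.1 q.1 := by ring

theorem dist_eq_dist_fst_of_dist_snd_le {α β : Type*} [PseudoMetricSpace α] [PseudoMetricSpace β]
    {p q : α × β} (h : dist p.2 q.2 ≤ dist p.1 q.1) : dist p q = dist p.1 q.1 :=
  Prod.dist_eq.trans (max_eq_left h)

theorem dist_fiberMidpoint_left (hs : Convex ℝ s) (hf : ∀ x ∈ s, 0 < f x)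
    (hfK : LipschitzOnWith K f s) (hCK : C + K ≤ 1) (hp : p ∈ closedSubgraph f s)
    (hq : q ∈ closedSubgraph f s) (hpq : dist p.2 q.2 ≤ C * dist p.1 q.1) :
    dist (fiberMidpoint f p q) p = (1 / 2) * dist p.1 q.1 := by
  have hfst : dist (fiberMidpoint f p q).1 p.1 = (1 / 2) * dist p.1 q.1 := by
    rw [fiberMidpoint, dist_midpoint_left, Real.norm_two, one_div]
  rw [dist_eq_dist_fst_of_dist_snd_le, hfst]
  calc dist (fiberMidpoint f p q).2 p.2
      ≤ (C + K) / 2 * dist p.1 q.1 := dist_fiberMidpoint_snd_left_le hs hf hfK hp hq hpq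
    _ ≤ 1 / 2 * dist p.1 q.1 := by gcongr
    _ = dist (fiberMidpoint f p q).1 p.1 := hfst.symm

theorem stmt_9_general (hs : Convex ℝ s) (hf : ∀ x ∈ s, 0 < f x) (hfK : LipschitzOnWith K f s)
    (hCK : C + K ≤ 1) (hp : p ∈ closedSubgraph f s) (hq : q ∈ closedSubgraph f s)
    (hpq : dist p.2 q.2 ≤ C * dist p.1 q.1) :
    fiberMidpoint f p q ∈ closedSubgraph f s ∧
      dist (fiberMidpoint f p q) p = (1 / 2) * dist p q ∧
      dist (fiberMidpoint f p q) q = (1 / 2) * dist p q ∧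
      dist p q = dist p.1 q.1 := by
  have hC : C ≤ 1 := by linarith [K.coe_nonneg]
  have hdist : dist p q = dist p.1 q.1 :=
    dist_eq_dist_fst_of_dist_snd_le (hpq.trans (mul_le_of_le_one_left dist_nonneg hC))
  have hqp : dist q.2 p.2 ≤ C * dist q.1 p.1 := by rwa [dist_comm, dist_comm q.1]
  refine ⟨fiberMidpoint_mem_closedSubgraph hs (fun x hx ↦ (hf x hx).le) hp hq, ?_, ?_, hdist⟩
  · rw [hdist, dist_fiberMidpoint_left hs hf hfK hCK hp hq hpq]
  · rw [hdist, fiberMidpoint_comm, dist_fiberMidpoint_left hs hf hfK hCK hq hp hqp, dist_comm q.1]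

end FiberMidpoint

theorem stmt_9 :
    ∃ k₀ > (0 : ℝ), ∀ ε k : ℝ, 0 < ε → ε < k → k < k₀ →
    ∀ φ : ℝ → ℝ, Continuous φ → (∀ x, 0 ≤ φ x) → (∀ x, φ x ≤ 1) →
      (∀ x, x ∉ Set.Icc (-k) k → φ x = 0) → (∫ x, φ x) = k →
    ∀ f f' : ℝ → ℝ, (∀ x, HasDerivAt f (f' x) x) → (∀ x, HasDerivAt f' (φ x) x) →
      f' (-1) = 0 → f (-1) = ε →
    ∀ X : Set (ℝ × ℝ),
      X = {p : ℝ × ℝ | p.1 ∈ Set.Icc (-1 : ℝ) 1 ∧ 0 ≤ p.2 ∧ p.2 ≤ f p.1} →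
    ∀ x₀ y₀ x₁ y₁ : ℝ, (x₀, y₀) ∈ X → (x₁, y₁) ∈ X → x₀ ≠ x₁ →
      |y₁ - y₀| ≤ (1 / 2) * |x₁ - x₀| →
    ((((x₀ + x₁) / 2 : ℝ), ((1 / 2) * (y₀ / f x₀ + y₁ / f x₁) * f ((x₀ + x₁) / 2) : ℝ)) ∈ X ∧
      dist (((x₀ + x₁) / 2 : ℝ), ((1 / 2) * (y₀ / f x₀ + y₁ / f x₁) * f ((x₀ + x₁) / 2) : ℝ))
          ((x₀, y₀) : ℝ × ℝ) = (1 / 2) * dist ((x₀, y₀) : ℝ × ℝ) ((x₁, y₁) : ℝ × ℝ) ∧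
      dist (((x₀ + x₁) / 2 : ℝ), ((1 / 2) * (y₀ / f x₀ + y₁ / f x₁) * f ((x₀ + x₁) / 2) : ℝ))
          ((x₁, y₁) : ℝ × ℝ) = (1 / 2) * dist ((x₀, y₀) : ℝ × ℝ) ((x₁, y₁) : ℝ × ℝ) ∧
      dist ((x₀, y₀) : ℝ × ℝ) ((x₁, y₁) : ℝ × ℝ) = |x₁ - x₀|) := by
  refine ⟨1 / 2, by norm_num, ?_⟩
  rintro ε k hε hεk hk φ - hφ₀ - - hφk f f' hf hf' hf'a hfa X rfl x₀ y₀ x₁ y₁ hp hq - hslope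
  have hk₀ : 0 < k := hε.trans hεk
  have hφ : Integrable φ := .of_integral_ne_zero (hφk ▸ hk₀.ne')
  have hlip : LipschitzOnWith k.toNNReal f (Icc (-1) 1) :=
    hφk ▸ (lipschitzOnWith_Ici_of_second_hasDerivAt_nonneg hf hf' hφ hφ₀ hf'a).mono
      Icc_subset_Ici_self
  have hpos : ∀ x ∈ Icc (-1 : ℝ) 1, 0 < f x := fun x hx ↦
    (hfa ▸ hε).trans_le
      (monotoneOn_Ici_of_second_hasDerivAt_nonneg hf hf' hφ₀ hf'a self_mem_Ici hx.1 hx.1)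
  have hCK : 1 / 2 + (k.toNNReal : ℝ) ≤ 1 := by
    rw [Real.coe_toNNReal k hk₀.le]
    linarith
  have hpq : dist y₀ y₁ ≤ 1 / 2 * dist x₀ x₁ := by
    rwa [Real.dist_eq, Real.dist_eq, abs_sub_comm, abs_sub_comm x₀]
  simpa only [closedSubgraph, fiberMidpoint, relativeHeight, midpoint_eq_add_div_two,
    Real.dist_eq x₀, abs_sub_comm x₀] using
      stmt_9_general (convex_Icc (-1) 1) hpos hlip hCK hp hq hpq
end
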